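/- arXiv:1010.4897 — 2 statements merged into one kernel-verified Lean document; each statement's English description precedes it below -/
import Mathlib

section
/- Let σ act on (ℂ^×)⁴ by σ(z, w, u, v) = (conj(w), conj(z), conj(v), conj(u)), let M = {(z, w, u, v) ∈ (ℂ^×)⁴ : z·w = u·v} and N = {(z, w, u, v) ∈ (ℂ^×)⁴ : z·w = 1 and u·v = 1}; both M and N are σ-stable subgroups. Then: (i) the cohomology group H¹(σ, M) := {m ∈ M : m·σ(m) = 1} / {q·σ(q)⁻¹ : q ∈ M} has exactly 2 elements; and (ii) the natural map H¹(σ, N) → H¹(σ, M) induced by the inclusion N ⊆ M is surjective, i.e., for every m ∈ M with m·σ(m) = 1 there exist n ∈ N with n·σ(n) = 1 and q ∈ M such that m = n·q·σ(q)⁻¹. In particular, the image of H¹(σ, N) → H¹(σ, M) has exactly 2 elements. -/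
noncomputable section

/-- Complex conjugation on `ℂˣ`. -/
def conjUnits : ℂˣ →* ℂˣ := Units.map (starRingEnd ℂ)

/-- The Galois action `σ(z, w, u, v) = (conj w, conj z, conj v, conj u)` on `(ℂˣ)⁴`,
as a group homomorphism. -/
def sigma4 : (ℂˣ × ℂˣ × ℂˣ × ℂˣ) →* (ℂˣ × ℂˣ × ℂˣ × ℂˣ) :=
  MonoidHom.mk'
    (fun x => (conjUnits x.2.1, conjUnits x.1, conjUnits x.2.2.2, conjUnits x.2.2.1))
    (by intro a b; simp [Prod.ext_iff, map_mul])

/-- The subgroup `M = {(z,w,u,v) : z·w = u·v}` of `(ℂˣ)⁴`. -/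
def Msub : Subgroup (ℂˣ × ℂˣ × ℂˣ × ℂˣ) where
  carrier := {x | x.1 * x.2.1 = x.2.2.1 * x.2.2.2}
  one_mem' := by simp
  mul_mem' := by
    intro a b ha hb
    simp only [Set.mem_setOf_eq, Prod.fst_mul, Prod.snd_mul] at *
    rw [mul_mul_mul_comm, ha, hb, mul_mul_mul_comm]
  inv_mem' := by
    intro a ha
    simp only [Set.mem_setOf_eq, Prod.fst_inv, Prod.snd_inv] at *
    rw [← mul_inv, ha, mul_inv]

/-- The subgroup `N = {(z,w,u,v) : z·w = 1 and u·v = 1}` of `(ℂˣ)⁴`. -/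
def Nsub : Subgroup (ℂˣ × ℂˣ × ℂˣ × ℂˣ) where
  carrier := {x | x.1 * x.2.1 = 1 ∧ x.2.2.1 * x.2.2.2 = 1}
  one_mem' := by simp
  mul_mem' := by
    intro a b ha hb
    simp only [Set.mem_setOf_eq, Prod.fst_mul, Prod.snd_mul] at *
    constructor
    · rw [mul_mul_mul_comm, ha.1, hb.1, one_mul]
    · rw [mul_mul_mul_comm, ha.2, hb.2, one_mul]
  inv_mem' := by
    intro a ha
    simp only [Set.mem_setOf_eq, Prod.fst_inv, Prod.snd_inv] at *
    constructor
    · rw [← mul_inv, ha.1, inv_one]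
    · rw [← mul_inv, ha.2, inv_one]

lemma sigma4_mem_Msub {x : ℂˣ × ℂˣ × ℂˣ × ℂˣ} (hx : x ∈ Msub) : sigma4 x ∈ Msub := by
  have hx' : x.1 * x.2.1 = x.2.2.1 * x.2.2.2 := hx
  show conjUnits x.2.1 * conjUnits x.1 = conjUnits x.2.2.2 * conjUnits x.2.2.1
  rw [← map_mul, ← map_mul, mul_comm x.2.1, hx', mul_comm]

/-- The restriction of `σ` to the subgroup `M`. -/
def sigmaM : ↥Msub →* ↥Msub :=
  (sigma4.comp Msub.subtype).codRestrict Msub fun x => sigma4_mem_Msub x.2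

/-- The group of `σ`-cocycles `{a : a·σ(a) = 1}` of a commutative group. -/
def cocycles {A : Type*} [CommGroup A] (σ : A →* A) : Subgroup A where
  carrier := {a | a * σ a = 1}
  one_mem' := by simp
  mul_mem' := by
    intro a b ha hb
    simp only [Set.mem_setOf_eq, map_mul] at *
    rw [mul_mul_mul_comm, ha, hb, one_mul]
  inv_mem' := by
    intro a ha
    simp only [Set.mem_setOf_eq, map_inv] at *
    rw [← mul_inv, ha, inv_one]

/-- The group of `σ`-coboundaries `{q·σ(q)⁻¹}` of a commutative group. -/
def boundaries {A : Type*} [CommGroup A] (σ : A →* A) : Subgroup A :=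
  MonoidHom.range <| MonoidHom.mk' (fun q => q * (σ q)⁻¹)
    (by intro a b; simp only [map_mul, mul_inv]; exact mul_mul_mul_comm a b _ _)

/-- The first cohomology group `H¹(σ, A) = {a : a·σ(a) = 1}/{q·σ(q)⁻¹}`. -/
abbrev H1 {A : Type*} [CommGroup A] (σ : A →* A) : Type _ :=
  ↥(cocycles σ) ⧸ ((boundaries σ).subgroupOf (cocycles σ))

/-!
The character `χ(z, w, u, v) = z / u` of `M` satisfies `χ(σ m) = (conj (χ m))⁻¹`, so it maps `M`
equivariantly onto `ℂˣ` with the action `t ↦ (conj t)⁻¹`, the complex points of the norm-one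
torus `T₁`. There cocycles are the nonzero reals and coboundaries are the norms `s * conj s`, so
`H¹ = ℝˣ / ℝ_{>0}` has order 2. By Hilbert 90 for `ker χ ≅ S`, the map that `χ` induces on `H¹`
is injective. It is surjective, already on `N`: for real `t` the cocycle `(t, t⁻¹, 1, 1)` of `N`
is sent to `t`.
-/

section Cohomology

variable {A B : Type*} [CommGroup A] [CommGroup B] {σ : A →* A} {τ : B →* B}

lemma mem_cocycles {a : A} : a ∈ cocycles σ ↔ a * σ a = 1 := Iff.rfl

lemma mem_boundaries {a : A} : a ∈ boundaries σ ↔ ∃ q, q * (σ q)⁻¹ = a := Iff.rfl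

lemma map_mem_cocycles {f : A →* B} (hf : ∀ a, f (σ a) = τ (f a)) {a : A}
    (ha : a ∈ cocycles σ) : f a ∈ cocycles τ := by
  rw [mem_cocycles, ← hf, ← map_mul, mem_cocycles.1 ha, map_one]

lemma map_mem_boundaries {f : A →* B} (hf : ∀ a, f (σ a) = τ (f a)) {a : A}
    (ha : a ∈ boundaries σ) : f a ∈ boundaries τ := by
  obtain ⟨q, rfl⟩ := mem_boundaries.1 ha
  exact mem_boundaries.2 ⟨f q, by rw [map_mul, map_inv, hf]⟩

lemma H1_mk_eq_mk_iff {a b : ↥(cocycles σ)} :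
    (QuotientGroup.mk a : H1 σ) = QuotientGroup.mk b ↔ (a / b : A) ∈ boundaries σ := by
  rw [eq_comm, QuotientGroup.eq, Subgroup.mem_subgroupOf, div_eq_inv_mul]
  rfl

lemma card_H1_eq_of_equivariant (f : A →* B) (hf : ∀ a, f (σ a) = τ (f a))
    (hinj : ∀ a ∈ cocycles σ, f a ∈ boundaries τ → a ∈ boundaries σ)
    (hsurj : ∀ b ∈ cocycles τ, ∃ a ∈ cocycles σ, f a = b) :
    Nat.card (H1 σ) = Nat.card (H1 τ) := by
  let g : ↥(cocycles σ) →* ↥(cocycles τ) :=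
    (f.comp (cocycles σ).subtype).codRestrict (cocycles τ) fun a => map_mem_cocycles hf a.2
  have hg : Function.Surjective g := fun b =>
    let ⟨a, ha, hab⟩ := hsurj b b.2
    ⟨⟨a, ha⟩, Subtype.ext hab⟩
  have comap_boundaries : (boundaries σ).subgroupOf (cocycles σ) =
      ((boundaries τ).subgroupOf (cocycles τ)).comap g :=
    Subgroup.ext fun a => ⟨map_mem_boundaries hf, hinj a a.2⟩
  change Subgroup.index _ = Subgroup.index _
  rw [comap_boundaries, Subgroup.index_comap_of_surjective _ hg]

end Cohomology

lemma conjUnits_conjUnits (t : ℂˣ) : conjUnits (conjUnits t) = t :=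
  Units.ext (Complex.conj_conj _)

section NormOneTorus

/-- The Galois action `t ↦ (conj t)⁻¹` on the complex points `ℂˣ` of the norm-one torus `T₁`. -/
def sigmaNormOne : ℂˣ →* ℂˣ := conjUnits⁻¹

lemma mem_cocycles_sigmaNormOne {t : ℂˣ} : t ∈ cocycles sigmaNormOne ↔ conjUnits t = t := by
  rw [mem_cocycles, sigmaNormOne, MonoidHom.inv_apply, mul_inv_eq_one, eq_comm]

lemma mem_boundaries_sigmaNormOne {t : ℂˣ} :
    t ∈ boundaries sigmaNormOne ↔ ∃ s, s * conjUnits s = t := by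
  simp only [mem_boundaries, sigmaNormOne, MonoidHom.inv_apply, inv_inv]

lemma coe_re_of_mem_cocycles_sigmaNormOne {t : ℂˣ} (ht : t ∈ cocycles sigmaNormOne) :
    (((t : ℂ).re : ℝ) : ℂ) = t :=
  Complex.conj_eq_iff_re.1 (congrArg Units.val (mem_cocycles_sigmaNormOne.1 ht))

lemma mem_boundaries_sigmaNormOne_iff_re_pos {t : ℂˣ} (ht : t ∈ cocycles sigmaNormOne) :
    t ∈ boundaries sigmaNormOne ↔ 0 < (t : ℂ).re := by
  rw [mem_boundaries_sigmaNormOne]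
  constructor
  · rintro ⟨s, rfl⟩
    have norm_eq : ((s * conjUnits s : ℂˣ) : ℂ) = Complex.normSq s := Complex.mul_conj _
    rw [norm_eq, Complex.ofReal_re]
    exact Complex.normSq_pos.2 s.ne_zero
  · intro hpos
    have sqrt_ne_zero : ((√(t : ℂ).re : ℝ) : ℂ) ≠ 0 :=
      Complex.ofReal_ne_zero.2 (Real.sqrt_pos.2 hpos).ne'
    refine ⟨Units.mk0 _ sqrt_ne_zero, Units.ext ?_⟩
    change ((√(t : ℂ).re : ℝ) : ℂ) * (starRingEnd ℂ) (√(t : ℂ).re : ℝ) = t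
    rw [Complex.conj_ofReal, ← Complex.ofReal_mul, Real.mul_self_sqrt hpos.le,
      coe_re_of_mem_cocycles_sigmaNormOne ht]

lemma neg_one_mem_cocycles_sigmaNormOne : (-1 : ℂˣ) ∈ cocycles sigmaNormOne :=
  mem_cocycles_sigmaNormOne.2 (Units.ext (by simp [conjUnits]))

lemma card_H1_sigmaNormOne : Nat.card (H1 sigmaNormOne) = 2 := by
  change Subgroup.index _ = 2
  refine Subgroup.index_eq_two_iff.2 ⟨⟨-1, neg_one_mem_cocycles_sigmaNormOne⟩, fun t => ?_⟩
  have re_ne_zero : (t : ℂˣ).val.re ≠ 0 := fun h =>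
    (t : ℂˣ).ne_zero (by rw [← coe_re_of_mem_cocycles_sigmaNormOne t.2, h, Complex.ofReal_zero])
  rw [Subgroup.mem_subgroupOf, Subgroup.mem_subgroupOf,
    mem_boundaries_sigmaNormOne_iff_re_pos (Subtype.prop _),
    mem_boundaries_sigmaNormOne_iff_re_pos t.2]
  rcases re_ne_zero.lt_or_gt with h | h <;> simp [Xor, h, h.not_gt]

end NormOneTorus

section SimilitudeTorus

lemma Nsub_le_Msub : Nsub ≤ Msub := fun _ hx => hx.1.trans hx.2.symm

lemma mk_mem_cocycles_sigmaM_iff {z w u v : ℂˣ} (h : (z, w, u, v) ∈ Msub) :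
    (⟨(z, w, u, v), h⟩ : ↥Msub) ∈ cocycles sigmaM ↔
      w = (conjUnits z)⁻¹ ∧ v = (conjUnits u)⁻¹ := by
  rw [mem_cocycles, Subtype.ext_iff]
  change (z * conjUnits w, w * conjUnits z, u * conjUnits v, v * conjUnits u) = (1, 1, 1, 1) ↔ _
  simp only [Prod.mk.injEq]
  constructor
  · rintro ⟨-, hwz, -, hvu⟩
    exact ⟨eq_inv_of_mul_eq_one_left hwz, eq_inv_of_mul_eq_one_left hvu⟩
  · rintro ⟨rfl, rfl⟩
    simp only [map_inv, conjUnits_conjUnits, mul_inv_cancel, inv_mul_cancel, and_self]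

/-- The character `χ(z, w, u, v) = z / u` of `M`, with values in the norm-one torus `T₁`. -/
def ratioM : ↥Msub →* ℂˣ :=
  MonoidHom.mk' (fun m => m.1.1 / m.1.2.2.1) fun _ _ => mul_div_mul_comm _ _ _ _

lemma ratioM_sigmaM (m : ↥Msub) : ratioM (sigmaM m) = sigmaNormOne (ratioM m) := by
  obtain ⟨⟨z, w, u, v⟩, hm⟩ := m
  change conjUnits w / conjUnits v = (conjUnits (z / u))⁻¹
  have hwv : w / v = u / z := div_eq_div_iff_mul_eq_mul.2 (by rw [mul_comm w]; exact hm)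
  rw [← map_div, ← map_inv, inv_div, hwv]

lemma mem_boundaries_sigmaM_of_ratioM {m : ↥Msub} (hm : m ∈ cocycles sigmaM)
    (hχ : ratioM m ∈ boundaries sigmaNormOne) : m ∈ boundaries sigmaM := by
  obtain ⟨⟨z, w, u, v⟩, hmM⟩ := m
  obtain ⟨rfl, rfl⟩ := (mk_mem_cocycles_sigmaM_iff hmM).1 hm
  obtain ⟨s, hs⟩ := mem_boundaries_sigmaNormOne.1 hχ
  have hz : z = s * conjUnits s * u := div_eq_iff_eq_mul.1 hs.symm
  -- The witness `q` lies over `s`: `χ q = z / (conj s * u) = s`.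
  refine mem_boundaries.2 ⟨⟨(z, 1, conjUnits s * u, s), ?_⟩, Subtype.ext ?_⟩
  · change z * 1 = conjUnits s * u * s
    rw [mul_one, hz, mul_rotate s]
  · change (z * (conjUnits 1)⁻¹, 1 * (conjUnits z)⁻¹, conjUnits s * u * (conjUnits s)⁻¹,
      s * (conjUnits (conjUnits s * u))⁻¹) = (z, (conjUnits z)⁻¹, u, (conjUnits u)⁻¹)
    rw [map_one, inv_one, mul_one, one_mul, mul_inv_cancel_comm, map_mul, conjUnits_conjUnits,
      mul_inv, mul_inv_cancel_left]

lemma exists_mem_Nsub_ratioM_eq {t : ℂˣ} (ht : t ∈ cocycles sigmaNormOne) :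
    ∃ n ∈ cocycles sigmaM, (n : ℂˣ × ℂˣ × ℂˣ × ℂˣ) ∈ Nsub ∧ ratioM n = t := by
  have hN : (t, t⁻¹, 1, 1) ∈ Nsub := ⟨mul_inv_cancel t, mul_one 1⟩
  refine ⟨⟨_, Nsub_le_Msub hN⟩, ?_, hN, div_one t⟩
  rw [mk_mem_cocycles_sigmaM_iff, mem_cocycles_sigmaNormOne.1 ht, map_one, inv_one]
  exact ⟨rfl, rfl⟩

lemma exists_mem_Nsub_div_mem_boundaries {m : ↥Msub} (hm : m ∈ cocycles sigmaM) :
    ∃ n ∈ cocycles sigmaM, (n : ℂˣ × ℂˣ × ℂˣ × ℂˣ) ∈ Nsub ∧ m / n ∈ boundaries sigmaM := by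
  obtain ⟨n, hn, hnN, hχ⟩ := exists_mem_Nsub_ratioM_eq (map_mem_cocycles ratioM_sigmaM hm)
  have ratioM_div : ratioM (m / n) = 1 := by rw [map_div, hχ, div_self']
  exact ⟨n, hn, hnN, mem_boundaries_sigmaM_of_ratioM (div_mem hm hn) (ratioM_div ▸ one_mem _)⟩

lemma card_H1_sigmaM : Nat.card (H1 sigmaM) = 2 := by
  rw [← card_H1_sigmaNormOne]
  refine card_H1_eq_of_equivariant ratioM ratioM_sigmaM
    (fun _ hm hχ => mem_boundaries_sigmaM_of_ratioM hm hχ) fun t ht => ?_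
  obtain ⟨n, hn, -, hχ⟩ := exists_mem_Nsub_ratioM_eq ht
  exact ⟨n, hn, hχ⟩

end SimilitudeTorus

/-- (i) `H¹(σ, M)` has exactly 2 elements; (ii) every `σ`-cocycle of `M` is,
modulo boundaries of `M`, a cocycle of `N`; in particular (iii) the image of
`H¹(σ, N) → H¹(σ, M)` has exactly 2 elements. -/
theorem stmt_3 :
    Nat.card (H1 sigmaM) = 2 ∧
    (∀ m ∈ Msub, m * sigma4 m = 1 →
      ∃ n ∈ Nsub, n * sigma4 n = 1 ∧ ∃ q ∈ Msub, m = n * q * (sigma4 q)⁻¹) ∧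
    Nat.card {c : H1 sigmaM | ∃ (n : ℂˣ × ℂˣ × ℂˣ × ℂˣ) (hn : n ∈ Msub),
      n ∈ Nsub ∧ ∃ h : (⟨n, hn⟩ : ↥Msub) ∈ cocycles sigmaM,
        c = QuotientGroup.mk (⟨⟨n, hn⟩, h⟩ : ↥(cocycles sigmaM))} = 2 := by
  refine ⟨card_H1_sigmaM, fun m hm hc => ?_, ?_⟩
  · obtain ⟨n, hn, hnN, q, hq⟩ :=
      exists_mem_Nsub_div_mem_boundaries (m := ⟨m, hm⟩) (Subtype.ext hc)
    refine ⟨n, hnN, congrArg Subtype.val hn, q, q.2, ?_⟩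
    rw [mul_assoc]
    exact eq_mul_of_div_eq' (congrArg Subtype.val hq).symm
  · rw [← card_H1_sigmaM, ← Nat.card_univ (α := H1 sigmaM)]
    congr 2
    refine Set.eq_univ_of_forall fun c => ?_
    obtain ⟨m, rfl⟩ := QuotientGroup.mk_surjective c
    obtain ⟨n, hn, hnN, hmn⟩ := exists_mem_Nsub_div_mem_boundaries m.2
    exact ⟨n, n.2, hnN, hn, H1_mk_eq_mk_iff.2 hmn⟩
end
end

section
/- Let J be the 4×4 complex matrix with rows (0,0,0,1), (0,0,−1,0), (0,1,0,0), (−1,0,0,0), and let GSp₄(ℂ) = {x ∈ GL₄(ℂ) : x·J·xᵀ = μ·J for some μ ∈ ℂ^×}. For g = [[g₁₁, g₁₂], [g₂₁, g₂₂]] and h = [[h₁₁, h₁₂], [h₂₁, h₂₂]] in GL₂(ℂ), let η(g, h) be the 4×4 matrix with rows (g₁₁, 0, 0, g₁₂), (0, h₁₁, h₁₂, 0), (0, h₂₁, h₂₂, 0), (g₂₁, 0, 0, g₂₂). Then η restricts to an injective group homomorphism on Ĥ = {(g, h) ∈ GL₂(ℂ) × GL₂(ℂ) : det g = det h} with values in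 GSp₄(ℂ), and the centralizer {x ∈ GSp₄(ℂ) : x·s = s·x} of the element s = diag(1, −1, −1, 1) in GSp₄(ℂ) is exactly the image η(Ĥ) = {η(g, h) : g, h ∈ GL₂(ℂ), det g = det h}. -/
open Matrix

noncomputable section

/-- The symplectic form matrix `J`. -/
def J4 : Matrix (Fin 4) (Fin 4) ℂ :=
  !![0, 0, 0, 1; 0, 0, -1, 0; 0, 1, 0, 0; -1, 0, 0, 0]

/-- `GSp₄(ℂ) = {x ∈ GL₄(ℂ) : x·J·xᵀ = μ·J for some μ ∈ ℂˣ}`, as a set of matrices. -/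
def GSp4C : Set (Matrix (Fin 4) (Fin 4) ℂ) :=
  {x | IsUnit x ∧ ∃ μ : ℂˣ, x * J4 * xᵀ = (μ : ℂ) • J4}

/-- The embedding `η(g, h)` of a pair of 2×2 matrices as a 4×4 matrix. -/
def etaMap (g h : Matrix (Fin 2) (Fin 2) ℂ) : Matrix (Fin 4) (Fin 4) ℂ :=
  !![g 0 0, 0, 0, g 0 1;
     0, h 0 0, h 0 1, 0;
     0, h 1 0, h 1 1, 0;
     g 1 0, 0, 0, g 1 1]

/-- `Ĥ = {(g, h) ∈ GL₂(ℂ) × GL₂(ℂ) : det g = det h}`, as a set of pairs of matrices. -/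
def HhatC : Set (Matrix (Fin 2) (Fin 2) ℂ × Matrix (Fin 2) (Fin 2) ℂ) :=
  {p | IsUnit p.1 ∧ IsUnit p.2 ∧ p.1.det = p.2.det}

/-- The element `s = diag(1, −1, −1, 1)`. -/
def sMat : Matrix (Fin 4) (Fin 4) ℂ :=
  !![1, 0, 0, 0; 0, -1, 0, 0; 0, 0, -1, 0; 0, 0, 0, 1]

/-!
Reordering the basis as `(0, 3 | 1, 2)` turns `η(g, h)` into the block-diagonal matrix with blocks
`g` and `h`. In this basis `s` is `diag(1, -1)`, whose centralizer consists of the block-diagonal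
matrices because `2` is invertible, and `J` has blocks `w` and `-w` for the 2×2 alternating
form `w`. Since `g * w * gᵀ = det g • w`, the matrix `η(g, h)` is a similitude of `J` exactly when
`det g = det h`, and this common determinant is the similitude factor.
-/

section AlternatingForm

/-- The Gram matrix `w` of the standard alternating form on `R²`; `J4` consists of the blocks
`w` and `-w`. -/
def altForm (R : Type*) [CommRing R] : Matrix (Fin 2) (Fin 2) R :=
  !![0, 1; -1, 0]

variable {R : Type*} [CommRing R]

theorem mul_altForm_mul_transpose (g : Matrix (Fin 2) (Fin 2) R) :
    g * altForm R * gᵀ = g.det • altForm R := by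
  ext i j
  fin_cases i <;> fin_cases j <;>
    simp [altForm, mul_apply, det_fin_two] <;> ring

theorem smul_altForm_inj {a b : R} : a • altForm R = b • altForm R ↔ a = b := by
  refine ⟨fun h ↦ ?_, congrArg (· • altForm R)⟩
  simpa [altForm] using congrFun₂ h 0 1

end AlternatingForm

theorem matrix_neg_eq_self_iff {m n R : Type*} [NonAssocRing R] (h2 : IsLeftRegular (2 : R))
    {B : Matrix m n R} : -B = B ↔ B = 0 := by
  refine ⟨fun hB ↦ ?_, fun hB ↦ by rw [hB, neg_zero]⟩
  ext i j
  refine h2 ?_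
  simpa [two_mul, neg_eq_iff_add_eq_zero] using congrFun₂ hB i j

theorem commute_fromBlocks_one_neg_one_iff {m n R : Type*} [Fintype m] [Fintype n]
    [DecidableEq m] [DecidableEq n] [NonAssocRing R] (h2 : IsLeftRegular (2 : R))
    {x : Matrix (m ⊕ n) (m ⊕ n) R} :
    Commute x (fromBlocks 1 0 0 (-1)) ↔ ∃ A D, x = fromBlocks A 0 0 D := by
  constructor
  · intro hx
    rw [← fromBlocks_toBlocks x] at hx ⊢
    obtain ⟨h₁₂, h₂₁⟩ : -x.toBlocks₁₂ = x.toBlocks₁₂ ∧ -x.toBlocks₂₁ = x.toBlocks₂₁ := by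
      simpa [Commute, SemiconjBy, fromBlocks_multiply, fromBlocks_inj,
        eq_comm (a := x.toBlocks₂₁)] using hx
    rw [matrix_neg_eq_self_iff h2] at h₁₂ h₂₁
    exact ⟨_, _, by rw [h₁₂, h₂₁]⟩
  · rintro ⟨A, D, rfl⟩
    simp [Commute, SemiconjBy, fromBlocks_multiply]

section EtaMap

/-- The reordering of the basis that makes `etaMap g h` block diagonal: the outer indices `0, 3`
carry the first block and the inner indices `1, 2` the second. -/
def outerInnerEquiv : Fin 2 ⊕ Fin 2 ≃ Fin 4 where
  toFun := Sum.elim ![0, 3] ![1, 2]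
  invFun := ![.inl 0, .inr 0, .inr 1, .inl 1]
  left_inv := by decide
  right_inv := by decide

variable (g h g' h' : Matrix (Fin 2) (Fin 2) ℂ)

theorem etaMap_eq_reindex :
    etaMap g h = reindexAlgEquiv ℂ ℂ outerInnerEquiv (fromBlocks g 0 0 h) := by
  ext i j
  fin_cases i <;> fin_cases j <;> rfl

theorem J4_eq_etaMap : J4 = etaMap (altForm ℂ) (-altForm ℂ) := by
  simp [J4, etaMap, altForm]

theorem sMat_eq_etaMap : sMat = etaMap 1 (-1) := by
  simp [sMat, etaMap]

theorem etaMap_one : etaMap 1 1 = 1 := by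
  rw [etaMap_eq_reindex, fromBlocks_one, map_one]

theorem etaMap_mul :
    etaMap (g * g') (h * h') = etaMap g h * etaMap g' h' := by
  simp [etaMap_eq_reindex, fromBlocks_multiply]

theorem etaMap_smul (c : ℂ) :
    etaMap (c • g) (c • h) = c • etaMap g h := by
  simp only [etaMap_eq_reindex, ← map_smul, fromBlocks_smul, smul_zero]

theorem etaMap_transpose : etaMap gᵀ hᵀ = (etaMap g h)ᵀ := by
  simp [etaMap_eq_reindex, fromBlocks_transpose]

theorem etaMap_mul_J4_mul_transpose :
    etaMap g h * J4 * (etaMap g h)ᵀ = etaMap (g.det • altForm ℂ) (h.det • -altForm ℂ) := by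
  rw [J4_eq_etaMap, ← etaMap_transpose, ← etaMap_mul, ← etaMap_mul, mul_neg, neg_mul,
    mul_altForm_mul_transpose, mul_altForm_mul_transpose, smul_neg]

variable {g h g' h'}

theorem etaMap_inj : etaMap g h = etaMap g' h' ↔ g = g' ∧ h = h' := by
  simp only [etaMap_eq_reindex, EmbeddingLike.apply_eq_iff_eq, fromBlocks_inj, true_and]

theorem isUnit_etaMap : IsUnit (etaMap g h) ↔ IsUnit g ∧ IsUnit h := by
  rw [etaMap_eq_reindex, MulEquiv.isUnit_map, isUnit_fromBlocks_zero₂₁]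

theorem commute_sMat_iff {x : Matrix (Fin 4) (Fin 4) ℂ} :
    Commute x sMat ↔ ∃ g h, x = etaMap g h := by
  obtain ⟨y, rfl⟩ := (reindexAlgEquiv ℂ ℂ outerInnerEquiv).surjective x
  simp only [sMat_eq_etaMap, etaMap_eq_reindex, EmbeddingLike.apply_eq_iff_eq]
  rw [commute_map_iff (reindexAlgEquiv ℂ ℂ outerInnerEquiv).injective]
  exact commute_fromBlocks_one_neg_one_iff (IsRegular.of_ne_zero two_ne_zero).left

theorem etaMap_mul_J4_mul_transpose_eq_smul_iff {c : ℂ} :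
    etaMap g h * J4 * (etaMap g h)ᵀ = c • J4 ↔ g.det = c ∧ h.det = c := by
  rw [etaMap_mul_J4_mul_transpose, J4_eq_etaMap, ← etaMap_smul, etaMap_inj, smul_neg, smul_neg,
    neg_inj, smul_altForm_inj, smul_altForm_inj]

theorem etaMap_mem_GSp4C_iff : etaMap g h ∈ GSp4C ↔ (g, h) ∈ HhatC := by
  simp only [GSp4C, HhatC, Set.mem_ofPred_eq, isUnit_etaMap,
    etaMap_mul_J4_mul_transpose_eq_smul_iff, and_assoc]
  refine and_congr_right fun hg ↦ and_congr_right fun _ ↦ ⟨?_, fun hdet ↦ ?_⟩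
  · rintro ⟨μ, hgμ, hhμ⟩
    exact hgμ.trans hhμ.symm
  · obtain ⟨μ, hμ⟩ := (isUnit_iff_isUnit_det g).1 hg
    exact ⟨μ, hμ.symm, hdet.symm.trans hμ.symm⟩

end EtaMap

theorem mul_mem_HhatC {p q : Matrix (Fin 2) (Fin 2) ℂ × Matrix (Fin 2) (Fin 2) ℂ}
    (hp : p ∈ HhatC) (hq : q ∈ HhatC) : p * q ∈ HhatC := by
  obtain ⟨hp₁, hp₂, hpdet⟩ := hp
  obtain ⟨hq₁, hq₂, hqdet⟩ := hq
  refine ⟨hp₁.mul hq₁, hp₂.mul hq₂, ?_⟩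
  rw [Prod.fst_mul, Prod.snd_mul, det_mul, det_mul, hpdet, hqdet]

/-- `η` restricts to an injective group homomorphism on `Ĥ` with values in
`GSp₄(ℂ)`, and the centralizer of `s = diag(1,−1,−1,1)` in `GSp₄(ℂ)` is exactly the image
`η(Ĥ)`. -/
theorem stmt_10 :
    Set.InjOn (fun p : Matrix (Fin 2) (Fin 2) ℂ × Matrix (Fin 2) (Fin 2) ℂ =>
      etaMap p.1 p.2) HhatC ∧
    etaMap 1 1 = 1 ∧
    (∀ p ∈ HhatC, ∀ q ∈ HhatC, (p.1 * q.1, p.2 * q.2) ∈ HhatC ∧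
      etaMap (p.1 * q.1) (p.2 * q.2) = etaMap p.1 p.2 * etaMap q.1 q.2) ∧
    (∀ p ∈ HhatC, etaMap p.1 p.2 ∈ GSp4C) ∧
    {x ∈ GSp4C | x * sMat = sMat * x} =
      (fun p : Matrix (Fin 2) (Fin 2) ℂ × Matrix (Fin 2) (Fin 2) ℂ =>
        etaMap p.1 p.2) '' HhatC := by
  refine ⟨fun p _ q _ hpq ↦ Prod.ext_iff.2 (etaMap_inj.1 hpq), etaMap_one,
    fun p hp q hq ↦ ⟨mul_mem_HhatC hp hq, etaMap_mul _ _ _ _⟩,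
    fun p hp ↦ etaMap_mem_GSp4C_iff.2 hp, ?_⟩
  ext x
  constructor
  · rintro ⟨hx, hcomm⟩
    obtain ⟨g, h, rfl⟩ := commute_sMat_iff.1 hcomm
    exact ⟨(g, h), etaMap_mem_GSp4C_iff.1 hx, rfl⟩
  · rintro ⟨⟨g, h⟩, hgh, rfl⟩
    exact ⟨etaMap_mem_GSp4C_iff.2 hgh, commute_sMat_iff.2 ⟨g, h, rfl⟩⟩
end
end
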